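/- Let K be a field of prime characteristic p, and let A be an associative unital K-algebra containing elements x, y such that the commutator c := xy − yx commutes with both x and y. Then applying the map z ↦ [z, y] exactly p − 2 times to the element c·x^{p−1} yields (p−1)!·c^{p−1}·x; that is, (c·x^{p−1})(ad_R y)^{p−2} = (p−1)!·c^{p−1}·x. (Claim proved in Case (D3b2) of the paper, where ([x,y]x^{p−1})(ad_R y)^{p−2} = (p−1)!·[x,y]^{p−1}·x.) -/

import Mathlib

/-!
If `⁅x, y⁆` commutes with `x`, the Leibniz rule makes the derivation `⁅·, y⁆` act on polynomials in
`x` as `⁅x, y⁆ · d/dx`. If `⁅x, y⁆` also commutes with `y`, it is a constant for that derivation, so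
iterating on `x ^ n` reduces to the iterated derivatives of the monomial `X ^ n`.
-/

section

open Polynomial

variable {A : Type*} [Ring A] {x y z : A}

theorem mul_lie_eq_mul_lie_add_lie_mul (a b y : A) : ⁅a * b, y⁆ = a * ⁅b, y⁆ + ⁅a, y⁆ * b := by
  simp only [Ring.lie_def]
  noncomm_ring

theorem mul_lie_of_commute (hz : Commute z y) (b : A) : ⁅z * b, y⁆ = z * ⁅b, y⁆ := by
  rw [mul_lie_eq_mul_lie_add_lie_mul, hz.lie_eq, zero_mul, add_zero]

theorem aeval_lie {R : Type*} [CommSemiring R] [Algebra R A] (hx : Commute ⁅x, y⁆ x) (f : R[X]) :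
    ⁅aeval x f, y⁆ = ⁅x, y⁆ * aeval x (derivative f) := by
  induction f using Polynomial.induction_on with
  | C a => simp [(Algebra.commute_algebraMap_left a y).lie_eq]
  | add f g hf hg =>
    rw [map_add, map_add, map_add, mul_add, ← hf, ← hg]
    simp only [Ring.lie_def]
    noncomm_ring
  | monomial n a ih =>
    have h_comm : Commute ⁅x, y⁆ (aeval x (C a * X ^ n)) := by
      simpa using (Algebra.commute_algebraMap_right a _).mul_right (hx.pow_right n)
    have h_deriv : derivative (C a * X ^ (n + 1)) =
        C a * X ^ n + derivative (C a * X ^ n) * X := by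
      rw [pow_succ, ← mul_assoc, derivative_mul (g := X), derivative_X, mul_one, add_comm]
    calc ⁅aeval x (C a * X ^ (n + 1)), y⁆
        = ⁅aeval x (C a * X ^ n) * x, y⁆ := by rw [pow_succ, ← mul_assoc, map_mul, aeval_X]
      _ = ⁅x, y⁆ * aeval x (C a * X ^ n) + ⁅x, y⁆ * aeval x (derivative (C a * X ^ n)) * x := by
        rw [mul_lie_eq_mul_lie_add_lie_mul, ih, h_comm.eq]
      _ = ⁅x, y⁆ * aeval x (derivative (C a * X ^ (n + 1))) := by
        rw [h_deriv, map_add, map_mul _ (derivative _), aeval_X, mul_add, mul_assoc]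

theorem iterate_lie_mul_aeval {R : Type*} [CommSemiring R] [Algebra R A]
    (hx : Commute ⁅x, y⁆ x) (hy : Commute ⁅x, y⁆ y) (hz : Commute z y) (k : ℕ) (f : R[X]) :
    (⁅·, y⁆)^[k] (z * aeval x f) = z * ⁅x, y⁆ ^ k * aeval x (derivative^[k] f) := by
  induction k with
  | zero => simp
  | succ k ih =>
    have hzk : Commute (z * ⁅x, y⁆ ^ k) y := hz.mul_left (hy.pow_left k)
    rw [Function.iterate_succ_apply', Function.iterate_succ_apply', ih, mul_lie_of_commute hzk,
      aeval_lie hx, pow_succ]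
    simp only [mul_assoc]

theorem iterate_lie_mul_pow (hx : Commute ⁅x, y⁆ x) (hy : Commute ⁅x, y⁆ y) (hz : Commute z y)
    (k n : ℕ) :
    (⁅·, y⁆)^[k] (z * x ^ n) = n.descFactorial k • (z * ⁅x, y⁆ ^ k * x ^ (n - k)) := by
  have h_aeval := iterate_lie_mul_aeval hx hy hz k (X ^ n : ℕ[X])
  rwa [iterate_derivative_X_pow_eq_smul, Nat.cast_id, map_smul, mul_smul_comm, map_pow, map_pow,
    aeval_X] at h_aeval

theorem case_D3b2_claim_general (hx : Commute ⁅x, y⁆ x) (hy : Commute ⁅x, y⁆ y) (n : ℕ) :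
    (⁅·, y⁆)^[n] (⁅x, y⁆ * x ^ (n + 1)) = (n + 1).factorial • (⁅x, y⁆ ^ (n + 1) * x) := by
  have h_factorial : (n + 1).descFactorial n = (n + 1).factorial := by
    simpa using Nat.factorial_mul_descFactorial n.le_succ
  rw [iterate_lie_mul_pow hx hy hy, h_factorial, Nat.add_sub_cancel_left, pow_one, pow_succ']

end

/-- Claim proved in Case (D3b2): in characteristic `p`, if `c := x * y - y * x` commutes
with both `x` and `y`, then `(c·x^(p-1))(ad_R y)^(p-2) = (p-1)! • (c^(p-1) * x)`. -/
theorem case_D3b2_claim {K A : Type*} (p : ℕ) [Fact p.Prime] [Field K] [CharP K p]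
    [Ring A] [Algebra K A] (x y : A)
    (hcx : (x * y - y * x) * x = x * (x * y - y * x))
    (hcy : (x * y - y * x) * y = y * (x * y - y * x)) :
    (fun b => b * y - y * b)^[p - 2] ((x * y - y * x) * x ^ (p - 1)) =
      (((p - 1).factorial : K)) • ((x * y - y * x) ^ (p - 1) * x) := by
  obtain ⟨n, rfl⟩ := Nat.exists_eq_add_of_le' (Fact.out : p.Prime).two_le
  rw [Nat.cast_smul_eq_nsmul]
  exact case_D3b2_claim_general hcx hcy n
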